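/- For q ≥ 2, the orthogonal complement V^⊥_{adj} of V_{adj} inside V_{A} is invariant under φ⊗², and the subspaces V_[A] and V^⊥_{adj} carry equivalent subrepresentations of φ⊗², i.e. there is a linear isomorphism T: V_[A] → V^⊥_{adj} with T(φ⊗²(U)x) = φ⊗²(U)(Tx) for all U ∈ 𝒩_q and x ∈ V_[A]. -/

import Mathlib

open Matrix MeasureTheory
open scoped Kronecker

noncomputable section

namespace CliffordPaper

/-- The single-qubit Pauli matrices `1, X, Y, Z`. -/
def pauli1 : Fin 4 → Matrix (Fin 2) (Fin 2) ℂ :=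
  ![1, !![0, 1; 1, 0], !![0, -Complex.I; Complex.I, 0], !![1, 0; 0, -1]]

/-- Index type for the computational basis of `q` qubits. -/
abbrev Idx (q : ℕ) := Fin q → Fin 2

/-- The space `M_d` of `d × d` complex matrices, `d = 2^q`. -/
abbrev Mat (q : ℕ) := Matrix (Idx q) (Idx q) ℂ

/-- The space `M_d ⊗ M_d`, realized as matrices indexed by the product index set
(the tensor factors combine via the Kronecker product `⊗ₖ`). -/
abbrev BMat (q : ℕ) := Matrix (Idx q × Idx q) (Idx q × Idx q) ℂ

/-- The `q`-fold Kronecker product of single-qubit Paulis with labels `a`. -/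
def PauliOp {q : ℕ} (a : Fin q → Fin 4) : Mat q :=
  Matrix.of fun x y => ∏ i, pauli1 (a i) (x i) (y i)

/-- `√d` as a complex number, where `d = 2^q`. -/
def sqrtd (q : ℕ) : ℂ := (Real.sqrt (2 ^ q) : ℝ)

/-- The set `σ̂_q` of normalized Pauli operators. -/
def sigmaHat (q : ℕ) : Set (Mat q) :=
  {M | ∃ a : Fin q → Fin 4, M = (sqrtd q)⁻¹ • PauliOp a}

/-- The normalized identity `σ₀ = 1/√d`. -/
def sigma0 (q : ℕ) : Mat q := (sqrtd q)⁻¹ • (1 : Mat q)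

/-- `σ_q = σ̂_q \ {σ₀}`. -/
def sigmaSet (q : ℕ) : Set (Mat q) := sigmaHat q \ {sigma0 q}

/-- `N_τ`: the normalized nonidentity Paulis anticommuting with `τ`. -/
def NSet {q : ℕ} (τ : Mat q) : Set (Mat q) :=
  {σ | σ ∈ sigmaSet q ∧ σ * τ + τ * σ = 0}

/-- `C_τ`: the normalized nonidentity Paulis distinct from `τ` commuting with `τ`. -/
def CSet {q : ℕ} (τ : Mat q) : Set (Mat q) :=
  {σ | σ ∈ sigmaSet q ∧ σ ≠ τ ∧ σ * τ = τ * σ}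

/-- `Ĉ_τ`: the normalized Paulis commuting with `τ`. -/
def CHatSet {q : ℕ} (τ : Mat q) : Set (Mat q) :=
  {σ | σ ∈ sigmaHat q ∧ σ * τ = τ * σ}

/-- The normalized product `σ·τ = √d στ`. -/
def nprod {q : ℕ} (σ τ : Mat q) : Mat q := sqrtd q • (σ * τ)

/-- The Clifford normalizer `𝒩_q`: unitaries mapping normalized Paulis to
signed normalized Paulis under conjugation. -/
def Cliff (q : ℕ) : Set (Mat q) :=
  {U | U ∈ Matrix.unitaryGroup (Idx q) ℂ ∧
    ∀ σ ∈ sigmaHat q, ∃ τ ∈ sigmaHat q, U * σ * Uᴴ = τ ∨ U * σ * Uᴴ = -τ}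

/-- The two-copy representation `φ⊗²(U) : A ⊗ B ↦ (UAU†) ⊗ (UBU†)`, extended linearly. -/
def twoCopy {q : ℕ} (U : Mat q) : BMat q →ₗ[ℂ] BMat q where
  toFun M := (U ⊗ₖ U) * M * (U ⊗ₖ U)ᴴ
  map_add' M N := by
    show (U ⊗ₖ U) * (M + N) * (U ⊗ₖ U)ᴴ = (U ⊗ₖ U) * M * (U ⊗ₖ U)ᴴ + (U ⊗ₖ U) * N * (U ⊗ₖ U)ᴴ
    rw [Matrix.mul_add, Matrix.add_mul]
  map_smul' c M := by
    show (U ⊗ₖ U) * (c • M) * (U ⊗ₖ U)ᴴ = c • ((U ⊗ₖ U) * M * (U ⊗ₖ U)ᴴ)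
    rw [Matrix.mul_smul, Matrix.smul_mul]

/-- The Hilbert–Schmidt inner product `⟨A, B⟩ = tr(A† B)`. -/
def hs {q : ℕ} (A B : BMat q) : ℂ := (Aᴴ * B).trace

/-- A subspace is invariant under the two-copy representation of `𝒩_q`. -/
def IsInvariant (q : ℕ) (W : Submodule ℂ (BMat q)) : Prop :=
  ∀ U ∈ Cliff q, ∀ v ∈ W, twoCopy U v ∈ W

/-- A nonzero invariant subspace carries an irreducible subrepresentation. -/
def CarriesIrred (q : ℕ) (W : Submodule ℂ (BMat q)) : Prop :=
  W ≠ ⊥ ∧ IsInvariant q W ∧ ∀ W' ≤ W, IsInvariant q W' → W' = ⊥ ∨ W' = W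

/-- Two invariant subspaces carry equivalent subrepresentations: there is a linear
isomorphism between them intertwining the two-copy representation. -/
def EquivRep (q : ℕ) (W W' : Submodule ℂ (BMat q)) : Prop :=
  ∃ T : BMat q →ₗ[ℂ] BMat q, Submodule.map T W = W' ∧
    (∀ x ∈ W, T x = 0 → x = 0) ∧
    ∀ U ∈ Cliff q, ∀ x ∈ W, T (twoCopy U x) = twoCopy U (T x)

/-- `S_{σ,τ} = (σ⊗τ + τ⊗σ)/√2`. -/
def SVec {q : ℕ} (σ τ : Mat q) : BMat q :=
  ((Real.sqrt 2 : ℂ))⁻¹ • (σ ⊗ₖ τ + τ ⊗ₖ σ)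

/-- `A_{σ,τ} = (σ⊗τ − τ⊗σ)/√2`. -/
def AVec {q : ℕ} (σ τ : Mat q) : BMat q :=
  ((Real.sqrt 2 : ℂ))⁻¹ • (σ ⊗ₖ τ - τ ⊗ₖ σ)

/-- The trivial sector `V_id`. -/
def Vid (q : ℕ) : Submodule ℂ (BMat q) :=
  Submodule.span ℂ {sigma0 q ⊗ₖ sigma0 q}

/-- The right adjoint sector `V_r`. -/
def Vr (q : ℕ) : Submodule ℂ (BMat q) :=
  Submodule.span ℂ {M | ∃ τ ∈ sigmaSet q, M = sigma0 q ⊗ₖ τ}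

/-- The left adjoint sector `V_l`. -/
def Vl (q : ℕ) : Submodule ℂ (BMat q) :=
  Submodule.span ℂ {M | ∃ τ ∈ sigmaSet q, M = τ ⊗ₖ sigma0 q}

/-- The diagonal sector `V_d`. -/
def Vdiag (q : ℕ) : Submodule ℂ (BMat q) :=
  Submodule.span ℂ {M | ∃ τ ∈ sigmaSet q, M = τ ⊗ₖ τ}

/-- The symmetric commuting sector `V_[S]`. -/
def VScom (q : ℕ) : Submodule ℂ (BMat q) :=
  Submodule.span ℂ {M | ∃ τ ∈ sigmaSet q, ∃ σ ∈ CSet τ, M = SVec σ τ}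

/-- The symmetric anti-commuting sector `V_{S}`. -/
def VSanti (q : ℕ) : Submodule ℂ (BMat q) :=
  Submodule.span ℂ {M | ∃ τ ∈ sigmaSet q, ∃ σ ∈ NSet τ, M = SVec σ τ}

/-- The antisymmetric commuting sector `V_[A]`. -/
def VAcom (q : ℕ) : Submodule ℂ (BMat q) :=
  Submodule.span ℂ {M | ∃ τ ∈ sigmaSet q, ∃ σ ∈ CSet τ, M = AVec σ τ}

/-- The antisymmetric anti-commuting sector `V_{A}`. -/
def VAanti (q : ℕ) : Submodule ℂ (BMat q) :=
  Submodule.span ℂ {M | ∃ τ ∈ sigmaSet q, ∃ σ ∈ NSet τ, M = AVec σ τ}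

/-- `V_[A]` presented with the spanning vectors `A_{σ,σ·τ}`, `σ ∈ C_τ`. -/
def VAcom' (q : ℕ) : Submodule ℂ (BMat q) :=
  Submodule.span ℂ {M | ∃ τ ∈ sigmaSet q, ∃ σ ∈ CSet τ, M = AVec σ (nprod σ τ)}

/-- `V_0 = span{Σ_{σ∈σ_q} σ⊗σ}`. -/
def V0diag (q : ℕ) : Submodule ℂ (BMat q) :=
  Submodule.span ℂ {∑ᶠ σ ∈ sigmaSet q, σ ⊗ₖ σ}

/-- `V_1`, the "positive" part of the diagonal sector. -/
def V1diag (q : ℕ) : Submodule ℂ (BMat q) :=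
  Submodule.span ℂ {v | ∃ lam : Mat q → ℂ,
    v = ∑ᶠ σ ∈ sigmaSet q, lam σ • (σ ⊗ₖ σ) ∧
    (∑ᶠ σ ∈ sigmaSet q, lam σ) = 0 ∧
    ∀ τ ∈ sigmaSet q, (∑ᶠ σ ∈ NSet τ, lam σ) = -((2 ^ q : ℂ) / 2) * lam τ}

/-- `V_2`, the "negative" part of the diagonal sector. -/
def V2diag (q : ℕ) : Submodule ℂ (BMat q) :=
  Submodule.span ℂ {v | ∃ lam : Mat q → ℂ,
    v = ∑ᶠ σ ∈ sigmaSet q, lam σ • (σ ⊗ₖ σ) ∧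
    (∑ᶠ σ ∈ sigmaSet q, lam σ) = 0 ∧
    ∀ τ ∈ sigmaSet q, (∑ᶠ σ ∈ NSet τ, lam σ) = ((2 ^ q : ℂ) / 2) * lam τ}

/-- `v^[adj]_τ = (2|C_τ|)^{-1/2} Σ_{σ∈C_τ} S_{σ,σ·τ}`. -/
def vadjS {q : ℕ} (τ : Mat q) : BMat q :=
  ((Real.sqrt (2 * ((CSet τ).ncard : ℝ)) : ℂ))⁻¹ • ∑ᶠ σ ∈ CSet τ, SVec σ (nprod σ τ)

/-- `v^{adj}_τ = (2|N_τ|)^{-1/2} Σ_{σ∈N_τ} A_{σ,iσ·τ}`. -/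
def vadjA {q : ℕ} (τ : Mat q) : BMat q :=
  ((Real.sqrt (2 * ((NSet τ).ncard : ℝ)) : ℂ))⁻¹ •
    ∑ᶠ σ ∈ NSet τ, AVec σ (Complex.I • nprod σ τ)

/-- The symmetric adjoint sector `V_[adj]`. -/
def VadjS (q : ℕ) : Submodule ℂ (BMat q) :=
  Submodule.span ℂ {M | ∃ τ ∈ sigmaSet q, M = vadjS τ}

/-- The antisymmetric adjoint sector `V_{adj}`. -/
def VadjA (q : ℕ) : Submodule ℂ (BMat q) :=
  Submodule.span ℂ {M | ∃ τ ∈ sigmaSet q, M = vadjA τ}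

/-- The orthogonal complement `V^⊥_{adj}` of `V_{adj}` inside `V_{A}`. -/
def VadjAperp (q : ℕ) : Submodule ℂ (BMat q) :=
  Submodule.span ℂ {v | v ∈ VAanti q ∧ ∀ w ∈ VadjA q, hs w v = 0}

/-- `V_{1}^τ`. -/
def V1symτ (q : ℕ) (τ : Mat q) : Submodule ℂ (BMat q) :=
  Submodule.span ℂ {v | ∃ lam : Mat q → ℂ,
    v = ∑ᶠ σ ∈ NSet τ, lam σ • SVec σ (Complex.I • nprod σ τ) ∧
    ∀ ν ∈ NSet τ, (∑ᶠ σ ∈ NSet τ ∩ CSet ν, lam σ) - (∑ᶠ σ ∈ NSet τ ∩ NSet ν, lam σ)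
      = ((2 ^ q : ℂ) / 2) * lam ν}

/-- `V_{2}^τ`. -/
def V2symτ (q : ℕ) (τ : Mat q) : Submodule ℂ (BMat q) :=
  Submodule.span ℂ {v | ∃ lam : Mat q → ℂ,
    v = ∑ᶠ σ ∈ NSet τ, lam σ • SVec σ (Complex.I • nprod σ τ) ∧
    ∀ ν ∈ NSet τ, (∑ᶠ σ ∈ NSet τ ∩ CSet ν, lam σ) - (∑ᶠ σ ∈ NSet τ ∩ NSet ν, lam σ)
      = -((2 ^ q : ℂ) / 2) * lam ν}

/-- `V_{1} = ⊕_τ V_{1}^τ`. -/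
def V1sym (q : ℕ) : Submodule ℂ (BMat q) := ⨆ τ ∈ sigmaSet q, V1symτ q τ

/-- `V_{2} = ⊕_τ V_{2}^τ`. -/
def V2sym (q : ℕ) : Submodule ℂ (BMat q) := ⨆ τ ∈ sigmaSet q, V2symτ q τ

/-- The defining property of the map `Θ` on `V_[A]`. -/
def ThetaProp (q : ℕ) (Θ : BMat q →ₗ[ℂ] BMat q) : Prop :=
  ∀ τ ∈ sigmaSet q, ∀ σ ∈ CSet τ,
    Θ (AVec σ (nprod σ τ)) =
      (∑ᶠ σ' ∈ NSet τ ∩ CSet σ, AVec σ' (Complex.I • nprod σ' τ)) -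
      ∑ᶠ σ' ∈ NSet τ ∩ NSet σ, AVec σ' (Complex.I • nprod σ' τ)

/-- `V` = span of off-diagonal products `σ⊗σ̂`, `σ ≠ σ̂`. -/
def Voff (q : ℕ) : Submodule ℂ (BMat q) :=
  Submodule.span ℂ {M | ∃ σ ∈ sigmaSet q, ∃ σ' ∈ sigmaSet q, σ ≠ σ' ∧ M = σ ⊗ₖ σ'}

/-- `V^τ` = span of the `σ⊗σ̂` with `σ·σ̂ ∈ {τ, −τ, iτ, −iτ}`. -/
def Vtau (q : ℕ) (τ : Mat q) : Submodule ℂ (BMat q) :=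
  Submodule.span ℂ {M | ∃ σ ∈ sigmaSet q, ∃ σ' ∈ sigmaSet q,
    (nprod σ σ' = τ ∨ nprod σ σ' = -τ ∨ nprod σ σ' = Complex.I • τ ∨
      nprod σ σ' = -(Complex.I • τ)) ∧ M = σ ⊗ₖ σ'}


/-!
Let `F` be the flip of the two tensor factors of `ℂ^d ⊗ ℂ^d`. It commutes with every `U ⊗ U`, so
left multiplication by `F` commutes with the two-copy representation; it is an involution and an
isometry for the Hilbert–Schmidt product. The expansion `F = Σ_{σ ∈ σ̂_q} σ ⊗ σ`, together with
`F A_{σ,τ} = -A_{σ,τ} F`, gives `2 F A_{σ,τ} = Σ_ν (A_{νσ,ντ} - A_{σν,τν})`, where only those `ν`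
contribute that commute with exactly one of `σ` and `τ`; for these, `νσ` and `ντ` anticommute if `σ`
and `τ` commute, and commute if `σ` and `τ` anticommute. Hence `F` exchanges the commuting and the
anticommuting antisymmetric sectors. The commuting sector is the orthogonal sum of `V_[A]` and the
span of the `A_{σ₀,τ}`, and `F` maps the latter onto `V_{adj}`; so it maps `V_[A]` onto
`V^⊥_{adj}`.
-/

/-! ### Kronecker products of families and the flip matrix -/

section PiKronecker

variable {ι l m n R : Type*} [Fintype ι] [CommSemiring R]

/-- The Kronecker product of a finite family of matrices; rows and columns are indexed by families
of indices, as in `PauliOp`. -/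
def piKronecker (A : ι → Matrix m n R) : Matrix (ι → m) (ι → n) R :=
  Matrix.of fun x y => ∏ i, A i (x i) (y i)

lemma piKronecker_mul [DecidableEq ι] [Fintype m] (A : ι → Matrix l m R) (B : ι → Matrix m n R) :
    piKronecker A * piKronecker B = piKronecker fun i => A i * B i := by
  ext x y
  simp only [piKronecker, Matrix.mul_apply, Matrix.of_apply, ← Finset.prod_mul_distrib,
    Finset.prod_univ_sum, Fintype.piFinset_univ]

lemma piKronecker_smul (c : ι → R) (A : ι → Matrix m n R) :
    piKronecker (fun i => c i • A i) = (∏ i, c i) • piKronecker A := by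
  ext x y
  simp only [piKronecker, Matrix.of_apply, Matrix.smul_apply, smul_eq_mul, Finset.prod_mul_distrib]

lemma piKronecker_one [DecidableEq n] : piKronecker (fun _ : ι => (1 : Matrix n n R)) = 1 := by
  ext x y
  simp only [piKronecker, Matrix.of_apply, Matrix.one_apply, Finset.prod_ite_zero,
    Finset.prod_const_one, Finset.mem_univ, true_imp_iff, funext_iff]

lemma trace_piKronecker [DecidableEq ι] [Fintype n] (A : ι → Matrix n n R) :
    (piKronecker A).trace = ∏ i, (A i).trace := by
  simp only [Matrix.trace, Matrix.diag_apply, piKronecker, Matrix.of_apply, Finset.prod_univ_sum,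
    Fintype.piFinset_univ]

end PiKronecker

section SwapMatrix

variable (n R : Type*) [DecidableEq n]

/-- The flip `x ⊗ y ↦ y ⊗ x` of the two tensor factors, as a permutation matrix. -/
def swapMatrix [Zero R] [One R] : Matrix (n × n) (n × n) R :=
  Equiv.Perm.permMatrix R (Equiv.prodComm n n)

variable {n R}

lemma swapMatrix_apply [Zero R] [One R] (x y : n × n) :
    swapMatrix n R x y = if x.1 = y.2 ∧ x.2 = y.1 then 1 else 0 := by
  obtain ⟨x₁, x₂⟩ := x
  obtain ⟨y₁, y₂⟩ := y
  simp [swapMatrix, PEquiv.toMatrix_apply, and_comm]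

lemma conjTranspose_swapMatrix [NonAssocSemiring R] [StarRing R] :
    (swapMatrix n R)ᴴ = swapMatrix n R :=
  Matrix.conjTranspose_permMatrix _

variable [Fintype n]

lemma swapMatrix_mul_self [NonAssocSemiring R] : swapMatrix n R * swapMatrix n R = 1 := by
  rw [swapMatrix, ← Matrix.permMatrix_mul, ← Matrix.permMatrix_one]
  rfl

lemma swapMatrix_mul_kronecker [CommSemiring R] (A B : Matrix n n R) :
    swapMatrix n R * (A ⊗ₖ B) = (B ⊗ₖ A) * swapMatrix n R := by
  ext ⟨x₁, x₂⟩ ⟨y₁, y₂⟩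
  simp [swapMatrix, PEquiv.toMatrix_toPEquiv_mul, PEquiv.mul_toMatrix_toPEquiv, mul_comm]

end SwapMatrix

section Pauli

variable {q : ℕ}

/-! ### Pauli operators -/

lemma pauli1_mul_self (a : Fin 4) : pauli1 a * pauli1 a = 1 := by
  fin_cases a <;> ext i j <;> fin_cases i <;> fin_cases j <;> simp [pauli1]

lemma exists_pauli1_mul_eq_smul (a b : Fin 4) :
    ∃ (c : Fin 4) (z : ℂ), pauli1 a * pauli1 b = z • pauli1 c := by
  refine ⟨a ^^^ b, !![1, 1, 1, 1; 1, 1, Complex.I, -Complex.I; 1, -Complex.I, 1, Complex.I;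
    1, Complex.I, -Complex.I, 1] a b, ?_⟩
  fin_cases a <;> fin_cases b <;> ext i j <;> fin_cases i <;> fin_cases j <;> simp [pauli1]

lemma exists_sign_pauli1_mul_comm (a b : Fin 4) :
    ∃ s : ℂ, s ^ 2 = 1 ∧ pauli1 a * pauli1 b = s • (pauli1 b * pauli1 a) := by
  refine ⟨if a = 0 ∨ b = 0 ∨ a = b then 1 else -1, by split_ifs <;> norm_num, ?_⟩
  fin_cases a <;> fin_cases b <;> ext i j <;> fin_cases i <;> fin_cases j <;> simp [pauli1]

lemma trace_pauli1_mul (a b : Fin 4) :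
    (pauli1 a * pauli1 b).trace = if a = b then 2 else 0 := by
  fin_cases a <;> fin_cases b <;> simp [pauli1, Matrix.trace_fin_two] <;> norm_num

lemma sum_pauli1_mul_pauli1 (i j k l : Fin 2) :
    ∑ a, pauli1 a i j * pauli1 a k l = if i = l ∧ k = j then 2 else 0 := by
  fin_cases i <;> fin_cases j <;> fin_cases k <;> fin_cases l <;>
    simp [pauli1, Fin.sum_univ_four] <;> norm_num

lemma PauliOp_eq_piKronecker (a : Fin q → Fin 4) : PauliOp a = piKronecker fun i => pauli1 (a i) :=
  rfl

lemma PauliOp_zero : PauliOp (0 : Fin q → Fin 4) = 1 :=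
  piKronecker_one

lemma PauliOp_mul_self (a : Fin q → Fin 4) : PauliOp a * PauliOp a = 1 := by
  simp only [PauliOp_eq_piKronecker, piKronecker_mul, pauli1_mul_self, piKronecker_one]

lemma exists_PauliOp_mul_eq_smul (a b : Fin q → Fin 4) :
    ∃ (c : Fin q → Fin 4) (z : ℂ), PauliOp a * PauliOp b = z • PauliOp c := by
  choose c z h using fun i => exists_pauli1_mul_eq_smul (a i) (b i)
  exact ⟨c, ∏ i, z i, by
    simp only [PauliOp_eq_piKronecker, piKronecker_mul, h, piKronecker_smul]⟩

lemma exists_sign_PauliOp_mul_comm (a b : Fin q → Fin 4) :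
    ∃ s : ℂ, s ^ 2 = 1 ∧ PauliOp a * PauliOp b = s • (PauliOp b * PauliOp a) := by
  choose s hs h using fun i => exists_sign_pauli1_mul_comm (a i) (b i)
  refine ⟨∏ i, s i, by simp only [← Finset.prod_pow, hs, Finset.prod_const_one], ?_⟩
  simp only [PauliOp_eq_piKronecker, piKronecker_mul, h, piKronecker_smul]

lemma trace_PauliOp_mul (a b : Fin q → Fin 4) :
    (PauliOp a * PauliOp b).trace = if a = b then 2 ^ q else 0 := by
  simp only [PauliOp_eq_piKronecker, piKronecker_mul, trace_piKronecker, trace_pauli1_mul,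
    Finset.prod_ite_zero, Finset.mem_univ, true_imp_iff, Finset.prod_const, Finset.card_univ,
    Fintype.card_fin, funext_iff]

lemma PauliOp_injective : Function.Injective (PauliOp : (Fin q → Fin 4) → Mat q) := by
  intro a b h
  by_contra hab
  have hab' := trace_PauliOp_mul a b
  rw [← h, trace_PauliOp_mul, if_pos rfl, if_neg hab] at hab'
  exact pow_ne_zero q two_ne_zero hab'

lemma sum_PauliOp_kronecker_self :
    ∑ a : Fin q → Fin 4, PauliOp a ⊗ₖ PauliOp a = (2 ^ q : ℂ) • swapMatrix (Idx q) ℂ := by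
  ext ⟨x, x'⟩ ⟨y, y'⟩
  calc (∑ a : Fin q → Fin 4, PauliOp a ⊗ₖ PauliOp a) (x, x') (y, y')
      = ∏ i, ∑ c, pauli1 c (x i) (y i) * pauli1 c (x' i) (y' i) := by
        simp only [Matrix.sum_apply, Matrix.kroneckerMap_apply, PauliOp, Matrix.of_apply,
          ← Finset.prod_mul_distrib, Finset.prod_univ_sum, Fintype.piFinset_univ]
    _ = ((2 ^ q : ℂ) • swapMatrix (Idx q) ℂ) (x, x') (y, y') := by
        simp only [sum_pauli1_mul_pauli1, Finset.prod_ite_zero, Finset.mem_univ, true_imp_iff,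
          Finset.prod_const, Finset.card_univ, Fintype.card_fin, Matrix.smul_apply,
          swapMatrix_apply, smul_eq_mul, mul_ite, mul_one, mul_zero, funext_iff, forall_and]

/-! ### Normalized Pauli operators -/

lemma sqrtd_ne_zero : sqrtd q ≠ 0 := by
  rw [sqrtd, Complex.ofReal_ne_zero]
  positivity

lemma sqrtd_mul_self : sqrtd q * sqrtd q = 2 ^ q := by
  rw [sqrtd, ← Complex.ofReal_mul, Real.mul_self_sqrt (by positivity)]
  norm_cast

lemma sqrtd_inv_mul_self : (sqrtd q)⁻¹ * (sqrtd q)⁻¹ = (2 ^ q)⁻¹ := by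
  rw [← mul_inv, sqrtd_mul_self]

lemma sigmaHat_eq_range :
    sigmaHat q = Set.range fun a : Fin q → Fin 4 => (sqrtd q)⁻¹ • PauliOp a := by
  ext M
  exact exists_congr fun _ => eq_comm

lemma sigmaHat_finite : (sigmaHat q).Finite :=
  sigmaHat_eq_range ▸ Set.finite_range _

lemma sigma0_mem_sigmaHat : sigma0 q ∈ sigmaHat q :=
  ⟨0, by rw [sigma0, PauliOp_zero]⟩

lemma commute_sigma0 (A : Mat q) : Commute (sigma0 q) A :=
  (Commute.one_left A).smul_left _

lemma finsum_sigmaHat_kronecker_self : ∑ᶠ σ ∈ sigmaHat q, σ ⊗ₖ σ = swapMatrix (Idx q) ℂ := by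
  have hinj : Function.Injective fun a : Fin q → Fin 4 => (sqrtd q)⁻¹ • PauliOp a :=
    (smul_right_injective _ (inv_ne_zero sqrtd_ne_zero)).comp PauliOp_injective
  rw [sigmaHat_eq_range, finsum_mem_range hinj, finsum_eq_sum_of_fintype]
  simp only [Matrix.smul_kronecker, Matrix.kronecker_smul, smul_smul, sqrtd_inv_mul_self]
  rw [← Finset.smul_sum, sum_PauliOp_kronecker_self,
    inv_smul_smul₀ (pow_ne_zero q two_ne_zero)]

variable {σ τ : Mat q}

lemma mul_self_of_mem_sigmaHat (hσ : σ ∈ sigmaHat q) : σ * σ = (2 ^ q : ℂ)⁻¹ • 1 := by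
  obtain ⟨a, rfl⟩ := hσ
  rw [smul_mul_smul_comm, PauliOp_mul_self, sqrtd_inv_mul_self]

lemma mul_ne_zero_of_mem_sigmaHat (hσ : σ ∈ sigmaHat q) {A : Mat q} (hA : A ≠ 0) : σ * A ≠ 0 := by
  intro h
  have hσA : (2 ^ q : ℂ)⁻¹ • A = 0 := by
    rw [← one_mul A, ← smul_mul_assoc, ← mul_self_of_mem_sigmaHat hσ, mul_assoc, h, mul_zero]
  exact hA ((smul_eq_zero_iff_right (inv_ne_zero (pow_ne_zero q two_ne_zero))).1 hσA)

lemma ne_zero_of_mem_sigmaHat (hσ : σ ∈ sigmaHat q) : σ ≠ 0 := by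
  have h := mul_ne_zero_of_mem_sigmaHat hσ one_ne_zero
  rwa [mul_one] at h

lemma exists_mul_eq_smul_of_mem_sigmaHat (hσ : σ ∈ sigmaHat q) (hτ : τ ∈ sigmaHat q) :
    ∃ ρ ∈ sigmaHat q, ∃ c : ℂ, c ≠ 0 ∧ σ * τ = c • ρ := by
  have hne := mul_ne_zero_of_mem_sigmaHat hσ (ne_zero_of_mem_sigmaHat hτ)
  obtain ⟨a, rfl⟩ := hσ
  obtain ⟨b, rfl⟩ := hτ
  obtain ⟨e, z, h⟩ := exists_PauliOp_mul_eq_smul a b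
  have hmul : (sqrtd q)⁻¹ • PauliOp a * (sqrtd q)⁻¹ • PauliOp b =
      ((sqrtd q)⁻¹ * z) • ((sqrtd q)⁻¹ • PauliOp e) := by
    rw [smul_mul_smul_comm, h, smul_smul, smul_smul, mul_right_comm]
  refine ⟨_, ⟨e, rfl⟩, _, fun h0 => hne ?_, hmul⟩
  rw [hmul, h0, zero_smul]

lemma exists_sign_mul_comm_of_mem_sigmaHat (hσ : σ ∈ sigmaHat q) (hτ : τ ∈ sigmaHat q) :
    ∃ s : ℂ, s ^ 2 = 1 ∧ σ * τ = s • (τ * σ) := by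
  obtain ⟨a, rfl⟩ := hσ
  obtain ⟨b, rfl⟩ := hτ
  obtain ⟨s, hs, h⟩ := exists_sign_PauliOp_mul_comm a b
  refine ⟨s, hs, ?_⟩
  rw [smul_mul_smul_comm, smul_mul_smul_comm, h, smul_comm]

lemma trace_mul_self_of_mem_sigmaHat (hσ : σ ∈ sigmaHat q) : (σ * σ).trace = 1 := by
  obtain ⟨a, rfl⟩ := hσ
  rw [smul_mul_smul_comm, sqrtd_inv_mul_self, Matrix.trace_smul, trace_PauliOp_mul, if_pos rfl,
    smul_eq_mul, inv_mul_cancel₀ (pow_ne_zero q two_ne_zero)]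

lemma trace_mul_eq_zero_iff (hσ : σ ∈ sigmaHat q) (hτ : τ ∈ sigmaHat q) :
    (σ * τ).trace = 0 ↔ σ ≠ τ := by
  constructor
  · rintro h rfl
    exact one_ne_zero ((trace_mul_self_of_mem_sigmaHat hσ).symm.trans h)
  · obtain ⟨a, rfl⟩ := hσ
    obtain ⟨b, rfl⟩ := hτ
    intro hne
    have hab : a ≠ b := fun h => hne (by rw [h])
    rw [smul_mul_smul_comm, Matrix.trace_smul, trace_PauliOp_mul, if_neg hab, smul_zero]

lemma mem_sigmaSet_iff_trace_eq_zero : σ ∈ sigmaSet q ↔ σ ∈ sigmaHat q ∧ σ.trace = 0 := by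
  refine and_congr_right fun hσ => ?_
  rw [Set.mem_singleton_iff, ← ne_eq, ← trace_mul_eq_zero_iff hσ sigma0_mem_sigmaHat, sigma0,
    mul_smul_comm, mul_one, Matrix.trace_smul, smul_eq_zero_iff_right (inv_ne_zero sqrtd_ne_zero)]

lemma mem_sigmaSet_of_mul_eq_neg_mul (hσ : σ ∈ sigmaHat q) (hτ : τ ∈ sigmaHat q)
    (h : σ * τ = -(τ * σ)) : σ ∈ sigmaSet q := by
  refine ⟨hσ, fun h0 => ?_⟩
  rw [Set.mem_singleton_iff.1 h0, ← (commute_sigma0 τ).eq, eq_neg_iff_add_eq_zero,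
    ← two_smul ℂ, smul_eq_zero_iff_right two_ne_zero] at h
  exact mul_ne_zero_of_mem_sigmaHat sigma0_mem_sigmaHat (ne_zero_of_mem_sigmaHat hτ) h

lemma mem_NSet_iff (hτ : τ ∈ sigmaHat q) :
    σ ∈ NSet τ ↔ σ ∈ sigmaHat q ∧ σ * τ = -(τ * σ) := by
  exact ⟨fun h => ⟨h.1.1, eq_neg_of_add_eq_zero_left h.2⟩,
    fun h => ⟨mem_sigmaSet_of_mul_eq_neg_mul h.1 hτ h.2, by rw [h.2, neg_add_cancel]⟩⟩

lemma NSet_finite (τ : Mat q) : (NSet τ).Finite :=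
  sigmaHat_finite.subset fun _ hσ => hσ.1.1

/-! ### Antisymmetric vectors -/

section AVec

variable (A B : Mat q) (c : ℂ)

lemma AVec_smul_left : AVec (c • A) B = c • AVec A B := by
  rw [AVec, AVec, Matrix.smul_kronecker, Matrix.kronecker_smul, ← smul_sub, smul_comm]

lemma AVec_smul_right : AVec A (c • B) = c • AVec A B := by
  rw [AVec, AVec, Matrix.smul_kronecker, Matrix.kronecker_smul, ← smul_sub, smul_comm]

lemma AVec_self : AVec A A = 0 := by
  rw [AVec, sub_self, smul_zero]

lemma AVec_swap : AVec B A = -AVec A B := by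
  rw [AVec, AVec, ← smul_neg, neg_sub]

lemma kronecker_self_mul_AVec (C : Mat q) : (C ⊗ₖ C) * AVec A B = AVec (C * A) (C * B) := by
  simp only [AVec, mul_smul_comm, mul_sub, ← Matrix.mul_kronecker_mul]

lemma AVec_mul_kronecker_self (C : Mat q) : AVec A B * (C ⊗ₖ C) = AVec (A * C) (B * C) := by
  simp only [AVec, smul_mul_assoc, sub_mul, ← Matrix.mul_kronecker_mul]

lemma twoCopy_AVec (U : Mat q) : twoCopy U (AVec A B) = AVec (U * A * Uᴴ) (U * B * Uᴴ) := by
  change (U ⊗ₖ U) * AVec A B * (U ⊗ₖ U)ᴴ = _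
  rw [Matrix.conjTranspose_kronecker, kronecker_self_mul_AVec, AVec_mul_kronecker_self]

lemma swapMatrix_mul_AVec :
    swapMatrix (Idx q) ℂ * AVec A B = -(AVec A B * swapMatrix (Idx q) ℂ) := by
  simp only [AVec, mul_smul_comm, smul_mul_assoc, mul_sub, sub_mul, swapMatrix_mul_kronecker,
    ← smul_neg, neg_sub]

lemma two_smul_swapMatrix_mul_AVec :
    (2 : ℂ) • (swapMatrix (Idx q) ℂ * AVec A B) =
      ∑ᶠ σ ∈ sigmaHat q, (AVec (σ * A) (σ * B) - AVec (A * σ) (B * σ)) := by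
  rw [two_smul]
  nth_rw 2 [swapMatrix_mul_AVec]
  rw [← sub_eq_add_neg, ← finsum_sigmaHat_kronecker_self, mul_finsum_mem' _ _ sigmaHat_finite,
    finsum_mem_mul' _ _ sigmaHat_finite, ← finsum_mem_sub_distrib _ _ sigmaHat_finite]
  simp only [kronecker_self_mul_AVec, AVec_mul_kronecker_self]

end AVec

/-! ### The flip exchanges commuting and anticommuting sectors -/

variable (q) in
/-- Left multiplication by the flip matrix, the intertwiner between `V_[A]` and `V^⊥_{adj}`. -/
def swapLeft : BMat q →ₗ[ℂ] BMat q :=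
  LinearMap.mulLeft ℂ (swapMatrix (Idx q) ℂ)

lemma swapLeft_apply (x : BMat q) : swapLeft q x = swapMatrix (Idx q) ℂ * x :=
  rfl

lemma swapLeft_involutive : Function.Involutive (swapLeft q) := fun x => by
  rw [swapLeft_apply, swapLeft_apply, ← mul_assoc, swapMatrix_mul_self, one_mul]

lemma swapLeft_twoCopy (U : Mat q) (x : BMat q) :
    swapLeft q (twoCopy U x) = twoCopy U (swapLeft q x) := by
  change swapMatrix (Idx q) ℂ * ((U ⊗ₖ U) * x * _) = (U ⊗ₖ U) * (swapMatrix (Idx q) ℂ * x) * _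
  rw [← mul_assoc, ← mul_assoc, swapMatrix_mul_kronecker, mul_assoc (U ⊗ₖ U)]

lemma hs_swapLeft_swapLeft (x y : BMat q) : hs (swapLeft q x) (swapLeft q y) = hs x y := by
  rw [hs, hs, swapLeft_apply, swapLeft_apply, Matrix.conjTranspose_mul, conjTranspose_swapMatrix,
    mul_assoc, ← mul_assoc (swapMatrix _ _), swapMatrix_mul_self, one_mul]

variable (q) in
/-- The antisymmetric sector with commutation sign `ε`, spanned by the `A_{σ,τ}` with
`στ = ε τσ`. Unlike in `V_[A]`, the identity `σ₀` is admitted. -/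
def commSector (ε : ℂ) : Submodule ℂ (BMat q) :=
  Submodule.span ℂ
    {M | ∃ σ ∈ sigmaHat q, ∃ τ ∈ sigmaHat q, σ * τ = ε • (τ * σ) ∧ M = AVec σ τ}

lemma AVec_mul_left_mem_commSector {ε : ℂ} {ν : Mat q} (hν : ν ∈ sigmaHat q) (hσ : σ ∈ sigmaHat q)
    (hτ : τ ∈ sigmaHat q) (h : (ν * σ) * (ν * τ) = ε • ((ν * τ) * (ν * σ))) :
    AVec (ν * σ) (ν * τ) ∈ commSector q ε := by
  obtain ⟨α, hα, a, ha, hνσ⟩ := exists_mul_eq_smul_of_mem_sigmaHat hν hσ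
  obtain ⟨β, hβ, b, hb, hντ⟩ := exists_mul_eq_smul_of_mem_sigmaHat hν hτ
  rw [hνσ, hντ, AVec_smul_left, AVec_smul_right]
  refine Submodule.smul_mem _ _ (Submodule.smul_mem _ _
    (Submodule.subset_span ⟨α, hα, β, hβ, ?_, rfl⟩))
  rw [hνσ, hντ, smul_mul_smul_comm, smul_mul_smul_comm, mul_comm b, smul_comm ε] at h
  exact smul_right_injective _ (mul_ne_zero ha hb) h

lemma mul_mul_mul_eq_smul_of_mem_sigmaHat {ν A B : Mat q} {α β ε : ℂ} (hν : ν ∈ sigmaHat q)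
    (hα : α ^ 2 = 1) (hA : A * ν = α • (ν * A)) (hB : B * ν = β • (ν * B))
    (h : A * B = ε • (B * A)) :
    (ν * A) * (ν * B) = (α * β * ε) • ((ν * B) * (ν * A)) := by
  have hAB : α • ((ν * A) * (ν * B)) = (2 ^ q : ℂ)⁻¹ • (A * B) := by
    rw [← smul_mul_assoc, ← hA, mul_assoc, ← mul_assoc ν, mul_self_of_mem_sigmaHat hν,
      smul_mul_assoc, one_mul, mul_smul_comm]
  have hBA : β • ((ν * B) * (ν * A)) = (2 ^ q : ℂ)⁻¹ • (B * A) := by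
    rw [← smul_mul_assoc, ← hB, mul_assoc, ← mul_assoc ν, mul_self_of_mem_sigmaHat hν,
      smul_mul_assoc, one_mul, mul_smul_comm]
  calc (ν * A) * (ν * B) = α • α • ((ν * A) * (ν * B)) := by
        rw [smul_smul, ← sq, hα, one_smul]
    _ = (α * ε) • β • ((ν * B) * (ν * A)) := by
        rw [hAB, h, hBA, smul_comm _ ε, smul_smul]
    _ = (α * β * ε) • ((ν * B) * (ν * A)) := by
        rw [smul_smul, mul_right_comm]

lemma swapLeft_AVec_mem_commSector {ε : ℂ} (hσ : σ ∈ sigmaHat q) (hτ : τ ∈ sigmaHat q)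
    (h : σ * τ = ε • (τ * σ)) : swapLeft q (AVec σ τ) ∈ commSector q (-ε) := by
  rw [← Submodule.smul_mem_iff _ (two_ne_zero (α := ℂ)), swapLeft_apply,
    two_smul_swapMatrix_mul_AVec]
  refine finsum_mem_induction (· ∈ commSector q (-ε)) (zero_mem _) (fun _ _ => add_mem)
    fun ν hν => ?_
  obtain ⟨α, hα, hσν⟩ := exists_sign_mul_comm_of_mem_sigmaHat hσ hν
  obtain ⟨β, hβ, hτν⟩ := exists_sign_mul_comm_of_mem_sigmaHat hτ hν
  rw [hσν, hτν, AVec_smul_left, AVec_smul_right, smul_smul]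
  have hαβ_sq : (α * β) ^ 2 = 1 := by rw [mul_pow, hα, hβ, one_mul]
  rcases sq_eq_one_iff.1 hαβ_sq with hαβ | hαβ
  · rw [hαβ, one_smul, sub_self]
    exact zero_mem _
  · have hsign := mul_mul_mul_eq_smul_of_mem_sigmaHat hν hα hσν hτν h
    rw [hαβ, neg_one_mul] at hsign
    have hmem := AVec_mul_left_mem_commSector hν hσ hτ hsign
    exact sub_mem hmem (Submodule.smul_mem _ _ hmem)

lemma map_swapLeft_commSector (ε : ℂ) :
    (commSector q ε).map (swapLeft q) = commSector q (-ε) := by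
  have hle (ε : ℂ) : (commSector q ε).map (swapLeft q) ≤ commSector q (-ε) := by
    rw [commSector, Submodule.map_span_le]
    rintro _ ⟨σ, hσ, τ, hτ, h, rfl⟩
    exact swapLeft_AVec_mem_commSector hσ hτ h
  refine (hle ε).antisymm fun x hx => ⟨swapLeft q x, ?_, swapLeft_involutive x⟩
  have hFx := hle (-ε) (Submodule.mem_map_of_mem hx)
  rwa [neg_neg] at hFx

/-! ### Identification of the sectors -/

lemma VAanti_eq_commSector : VAanti q = commSector q (-1) := by
  refine le_antisymm (Submodule.span_mono ?_) (Submodule.span_mono ?_)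
  · rintro _ ⟨τ, hτ, σ, hσ, rfl⟩
    exact ⟨σ, hσ.1.1, τ, hτ.1, by rw [neg_one_smul, ((mem_NSet_iff hτ.1).1 hσ).2], rfl⟩
  · rintro _ ⟨σ, hσ, τ, hτ, h, rfl⟩
    rw [neg_one_smul] at h
    exact ⟨τ, mem_sigmaSet_of_mul_eq_neg_mul hτ hσ (by rw [h, neg_neg]), σ,
      (mem_NSet_iff hτ).2 ⟨hσ, h⟩, rfl⟩

lemma nprod_nprod_self (hσ : σ ∈ sigmaHat q) (A : Mat q) : nprod σ (nprod σ A) = A := by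
  rw [nprod, nprod, mul_smul_comm, ← mul_assoc, mul_self_of_mem_sigmaHat hσ, smul_mul_assoc,
    one_mul, smul_smul, smul_smul, sqrtd_mul_self,
    mul_inv_cancel₀ (pow_ne_zero q two_ne_zero), one_smul]

lemma exists_nprod_eq_smul_of_mem_CSet (hτ : τ ∈ sigmaSet q) (hσ : σ ∈ CSet τ) :
    ∃ ρ ∈ sigmaSet q, σ ∈ CSet ρ ∧ ∃ c : ℂ, nprod σ τ = c • ρ := by
  obtain ⟨hσ', hστ, hcomm⟩ := hσ
  obtain ⟨ρ, hρ, c, hc, h⟩ := exists_mul_eq_smul_of_mem_sigmaHat hσ'.1 hτ.1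
  have hρ_trace : ρ.trace = 0 := by
    have h_trace := (trace_mul_eq_zero_iff hσ'.1 hτ.1).2 hστ
    rwa [h, Matrix.trace_smul, smul_eq_zero_iff_right hc] at h_trace
  have hσρ_trace : (σ * ρ).trace = 0 := by
    rw [← smul_eq_zero_iff_right hc, ← Matrix.trace_smul, ← mul_smul_comm, ← h, ← mul_assoc,
      mul_self_of_mem_sigmaHat hσ'.1, smul_mul_assoc, one_mul, Matrix.trace_smul,
      (mem_sigmaSet_iff_trace_eq_zero.1 hτ).2, smul_zero]
  have hσρ : σ * ρ = ρ * σ := by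
    refine smul_right_injective _ hc ?_
    change c • (σ * ρ) = c • (ρ * σ)
    rw [← mul_smul_comm, ← smul_mul_assoc, ← h, mul_assoc, hcomm]
  exact ⟨ρ, mem_sigmaSet_iff_trace_eq_zero.2 ⟨hρ, hρ_trace⟩,
    ⟨hσ', (trace_mul_eq_zero_iff hσ'.1 hρ).1 hσρ_trace, hσρ⟩, sqrtd q * c, by
      rw [nprod, h, smul_smul]⟩

lemma VAcom'_eq_VAcom : VAcom' q = VAcom q := by
  refine le_antisymm (Submodule.span_le.2 ?_) (Submodule.span_le.2 ?_)
  · rintro _ ⟨τ, hτ, σ, hσ, rfl⟩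
    obtain ⟨ρ, hρ, hσρ, c, hc⟩ := exists_nprod_eq_smul_of_mem_CSet hτ hσ
    rw [hc, AVec_smul_right]
    exact Submodule.smul_mem _ _ (Submodule.subset_span ⟨ρ, hρ, σ, hσρ, rfl⟩)
  · rintro _ ⟨τ, hτ, σ, hσ, rfl⟩
    obtain ⟨ρ, hρ, hσρ, c, hc⟩ := exists_nprod_eq_smul_of_mem_CSet hτ hσ
    have hτρ : τ = c • nprod σ ρ := by
      rw [← nprod_nprod_self hσ.1.1 τ, hc, nprod, nprod, mul_smul_comm, smul_comm]
    rw [hτρ, AVec_smul_right]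
    exact Submodule.smul_mem _ _ (Submodule.subset_span ⟨ρ, hρ, σ, hσρ, rfl⟩)

lemma AVec_mem_VAcom (hσ : σ ∈ sigmaSet q) (hτ : τ ∈ sigmaSet q) (h : σ * τ = τ * σ) :
    AVec σ τ ∈ VAcom q := by
  by_cases hστ : σ = τ
  · rw [hστ, AVec_self]
    exact zero_mem _
  · exact Submodule.subset_span ⟨τ, hτ, σ, ⟨hσ, hστ, h⟩, rfl⟩

variable (q) in
/-- The span of the `A_{σ₀,τ}`, the antisymmetric part of `V_l ⊕ V_r`. -/
def VAid : Submodule ℂ (BMat q) :=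
  Submodule.span ℂ {M | ∃ τ ∈ sigmaSet q, M = AVec (sigma0 q) τ}

lemma AVec_sigma0_mem_VAid (hτ : τ ∈ sigmaHat q) : AVec (sigma0 q) τ ∈ VAid q := by
  by_cases hτ0 : τ = sigma0 q
  · rw [hτ0, AVec_self]
    exact zero_mem _
  · exact Submodule.subset_span ⟨τ, ⟨hτ, hτ0⟩, rfl⟩

lemma VAcom_sup_VAid : VAcom q ⊔ VAid q = commSector q 1 := by
  apply le_antisymm
  · refine sup_le (Submodule.span_mono ?_) (Submodule.span_mono ?_)
    · rintro _ ⟨τ, hτ, σ, hσ, rfl⟩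
      exact ⟨σ, hσ.1.1, τ, hτ.1, by rw [one_smul, hσ.2.2], rfl⟩
    · rintro _ ⟨τ, hτ, rfl⟩
      exact ⟨_, sigma0_mem_sigmaHat, τ, hτ.1, by rw [one_smul, (commute_sigma0 τ).eq], rfl⟩
  · refine Submodule.span_le.2 ?_
    rintro _ ⟨σ, hσ, τ, hτ, h, rfl⟩
    rw [one_smul] at h
    by_cases hσ0 : σ = sigma0 q
    · subst hσ0
      exact Submodule.mem_sup_right (AVec_sigma0_mem_VAid hτ)
    by_cases hτ0 : τ = sigma0 q
    · subst hτ0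
      rw [AVec_swap]
      exact Submodule.mem_sup_right (neg_mem (AVec_sigma0_mem_VAid hσ))
    exact Submodule.mem_sup_left (AVec_mem_VAcom ⟨hσ, hσ0⟩ ⟨hτ, hτ0⟩ h)

lemma two_smul_swapLeft_AVec_sigma0 (hτ : τ ∈ sigmaHat q) :
    (2 : ℂ) • swapLeft q (AVec (sigma0 q) τ) =
      ∑ᶠ σ ∈ NSet τ, (2 * (sqrtd q)⁻¹) • AVec σ (σ * τ) := by
  have hterm (σ : Mat q) : AVec (σ * sigma0 q) (σ * τ) - AVec (sigma0 q * σ) (τ * σ) =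
      (sqrtd q)⁻¹ • (AVec σ (σ * τ) - AVec σ (τ * σ)) := by
    rw [← (commute_sigma0 σ).eq, sigma0, smul_mul_assoc, one_mul, AVec_smul_left,
      AVec_smul_left, smul_sub]
  rw [swapLeft_apply, two_smul_swapMatrix_mul_AVec]
  simp only [hterm]
  rw [finsum_mem_inter_support_eq' _ (sigmaHat q) (NSet τ)]
  · refine finsum_mem_congr rfl fun σ hσ => ?_
    rw [← neg_eq_iff_eq_neg.2 ((mem_NSet_iff hτ).1 hσ).2, ← neg_one_smul ℂ (σ * τ),
      AVec_smul_right, neg_one_smul, sub_neg_eq_add, ← two_smul ℂ, smul_smul, mul_comm]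
  · intro σ hσ_support
    refine ⟨fun hσ => (mem_NSet_iff hτ).2 ⟨hσ, ?_⟩, fun hσ => hσ.1.1⟩
    obtain ⟨s, hs, h⟩ := exists_sign_mul_comm_of_mem_sigmaHat hσ hτ
    rcases sq_eq_one_iff.1 hs with rfl | rfl
    · refine absurd ?_ hσ_support
      beta_reduce
      rw [h, one_smul, sub_self, smul_zero]
    · rw [h, neg_one_smul]

lemma finsum_NSet_AVec (hτ : τ ∈ sigmaHat q) :
    ∑ᶠ σ ∈ NSet τ, AVec σ (Complex.I • nprod σ τ) =
      (Complex.I * 2 ^ q) • swapLeft q (AVec (sigma0 q) τ) := by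
  have hterm (σ : Mat q) : AVec σ (Complex.I • nprod σ τ) =
      (Complex.I * 2 ^ q / 2) • (2 * (sqrtd q)⁻¹) • AVec σ (σ * τ) := by
    rw [nprod, smul_smul, AVec_smul_right, smul_smul, ← sqrtd_mul_self]
    congr 1
    field_simp [sqrtd_ne_zero]
  simp only [hterm]
  rw [← smul_finsum_mem (NSet_finite τ), ← two_smul_swapLeft_AVec_sigma0 hτ, smul_smul,
    div_mul_cancel₀ _ two_ne_zero]

/-- If `NSet τ` is empty, the factor `0⁻¹` in `vadjA τ` is a junk value, but both sides vanish. -/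
lemma sqrt_smul_vadjA (τ : Mat q) :
    (Real.sqrt (2 * ((NSet τ).ncard : ℝ)) : ℂ) • vadjA τ =
      ∑ᶠ σ ∈ NSet τ, AVec σ (Complex.I • nprod σ τ) := by
  rcases (NSet τ).eq_empty_or_nonempty with h | h
  · rw [vadjA, h, finsum_mem_empty, smul_zero, smul_zero]
  · have hcard : 0 < (NSet τ).ncard := (Set.ncard_pos (NSet_finite τ)).2 h
    exact smul_inv_smul₀ (Complex.ofReal_ne_zero.2 (by positivity)) _

lemma map_swapLeft_VAid : (VAid q).map (swapLeft q) = VadjA q := by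
  apply le_antisymm
  · rw [VAid, Submodule.map_span_le]
    rintro _ ⟨τ, hτ, rfl⟩
    rw [← Submodule.smul_mem_iff _ (mul_ne_zero Complex.I_ne_zero (pow_ne_zero q two_ne_zero)),
      ← finsum_NSet_AVec hτ.1, ← sqrt_smul_vadjA]
    exact Submodule.smul_mem _ _ (Submodule.subset_span ⟨τ, hτ, rfl⟩)
  · refine Submodule.span_le.2 ?_
    rintro _ ⟨τ, hτ, rfl⟩
    rw [vadjA, finsum_NSet_AVec hτ.1]
    exact Submodule.smul_mem _ _ (Submodule.smul_mem _ _
      (Submodule.mem_map_of_mem (Submodule.subset_span ⟨τ, hτ, rfl⟩)))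

/-! ### Orthogonality -/

variable (q) in
/-- The Hilbert–Schmidt inner product `hs` as a sesquilinear form. -/
def hsForm : BMat q →ₗ⋆[ℂ] BMat q →ₗ[ℂ] ℂ :=
  LinearMap.mk₂'ₛₗ (starRingEnd ℂ) (RingHom.id ℂ) hs
    (fun _ _ _ => by simp only [hs, Matrix.conjTranspose_add, add_mul, Matrix.trace_add])
    (fun _ _ _ => by simp only [hs, Matrix.conjTranspose_smul, smul_mul_assoc, Matrix.trace_smul,
      starRingEnd_apply])
    (fun _ _ _ => by simp only [hs, mul_add, Matrix.trace_add])
    (fun _ _ _ => by simp only [hs, mul_smul_comm, Matrix.trace_smul, RingHom.id_apply])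

lemma inf_orthogonalBilin_hsForm (W : Submodule ℂ (BMat q)) :
    W ⊓ W.orthogonalBilin (hsForm q) = ⊥ := by
  refine (Submodule.eq_bot_iff _).2 fun x hx => ?_
  open scoped ComplexOrder in
  exact Matrix.trace_conjTranspose_mul_self_eq_zero_iff.1 (hx.2 x hx.1)

lemma hs_AVec_sigma0_AVec (A : Mat q) (hσ : σ.trace = 0) (hτ : τ.trace = 0) :
    hs (AVec (sigma0 q) A) (AVec σ τ) = 0 := by
  simp [hs, AVec, sigma0, mul_sub, sub_mul, Matrix.conjTranspose_kronecker,
    ← Matrix.mul_kronecker_mul, Matrix.trace_kronecker, hσ, hτ]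

lemma VAcom_le_orthogonalBilin_VAid : VAcom q ≤ (VAid q).orthogonalBilin (hsForm q) := by
  refine Submodule.span_le.2 ?_
  rintro _ ⟨τ, hτ, σ, hσ, rfl⟩
  suffices h : VAid q ≤ LinearMap.ker ((hsForm q).flip (AVec σ τ)) from fun _ he => h he
  refine Submodule.span_le.2 ?_
  rintro _ ⟨ρ, -, rfl⟩
  exact hs_AVec_sigma0_AVec ρ (mem_sigmaSet_iff_trace_eq_zero.1 hσ.1).2
    (mem_sigmaSet_iff_trace_eq_zero.1 hτ).2

lemma VadjAperp_eq_inf : VadjAperp q = VAanti q ⊓ (VadjA q).orthogonalBilin (hsForm q) :=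
  Submodule.span_eq (VAanti q ⊓ (VadjA q).orthogonalBilin (hsForm q))

lemma map_swapLeft_VAcom : (VAcom q).map (swapLeft q) = VadjAperp q := by
  have horth : (VAcom q).map (swapLeft q) ≤ (VadjA q).orthogonalBilin (hsForm q) := by
    rw [← map_swapLeft_VAid]
    rintro _ ⟨x, hx, rfl⟩ _ ⟨y, hy, rfl⟩
    exact (hs_swapLeft_swapLeft y x).trans (VAcom_le_orthogonalBilin_VAid hx y hy)
  have hsup : VAanti q = (VAcom q).map (swapLeft q) ⊔ VadjA q := by
    rw [VAanti_eq_commSector, ← map_swapLeft_commSector, ← VAcom_sup_VAid, Submodule.map_sup,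
      map_swapLeft_VAid]
  rw [VadjAperp_eq_inf, hsup, sup_inf_assoc_of_le _ horth, inf_orthogonalBilin_hsForm, sup_bot_eq]

/-! ### The action of the Clifford normalizer -/

section UnitaryConj

variable {n R : Type*} [Fintype n] [DecidableEq n] [CommRing R] [StarRing R] {U : Matrix n n R}

lemma conj_mul_conj_of_mem_unitaryGroup (hU : U ∈ Matrix.unitaryGroup n R) (A B : Matrix n n R) :
    (U * A * Uᴴ) * (U * B * Uᴴ) = U * (A * B) * Uᴴ := by
  have hUU : Uᴴ * U = 1 := Matrix.mem_unitaryGroup_iff'.1 hU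
  rw [mul_assoc (U * A), ← mul_assoc Uᴴ, ← mul_assoc Uᴴ, hUU, one_mul, ← mul_assoc, mul_assoc U]

lemma trace_conj_of_mem_unitaryGroup (hU : U ∈ Matrix.unitaryGroup n R) (A : Matrix n n R) :
    (U * A * Uᴴ).trace = A.trace := by
  have hUU : Uᴴ * U = 1 := Matrix.mem_unitaryGroup_iff'.1 hU
  rw [Matrix.trace_mul_cycle, hUU, one_mul]

end UnitaryConj

variable {U : Mat q}

lemma exists_conj_eq_smul_of_mem_Cliff (hU : U ∈ Cliff q) (hσ : σ ∈ sigmaSet q) :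
    ∃ σ' ∈ sigmaSet q, ∃ s : ℂ, s ≠ 0 ∧ U * σ * Uᴴ = s • σ' := by
  obtain ⟨σ', hσ', s, hs, h⟩ : ∃ σ' ∈ sigmaHat q, ∃ s : ℂ, s ≠ 0 ∧ U * σ * Uᴴ = s • σ' := by
    obtain ⟨σ', hσ', h | h⟩ := hU.2 σ hσ.1
    · exact ⟨σ', hσ', 1, one_ne_zero, by rw [h, one_smul]⟩
    · exact ⟨σ', hσ', -1, neg_ne_zero.2 one_ne_zero, by rw [h, neg_one_smul]⟩
  refine ⟨σ', mem_sigmaSet_iff_trace_eq_zero.2 ⟨hσ', ?_⟩, s, hs, h⟩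
  rw [← smul_eq_zero_iff_right hs, ← Matrix.trace_smul, ← h, trace_conj_of_mem_unitaryGroup hU.1,
    (mem_sigmaSet_iff_trace_eq_zero.1 hσ).2]

lemma isInvariant_VAcom : IsInvariant q (VAcom q) := by
  intro U hU
  suffices h : VAcom q ≤ (VAcom q).comap (twoCopy U) from fun _ hv => h hv
  refine Submodule.span_le.2 ?_
  rintro _ ⟨τ, hτ, σ, ⟨hσ, -, hcomm⟩, rfl⟩
  obtain ⟨σ', hσ', s, hs, hσσ'⟩ := exists_conj_eq_smul_of_mem_Cliff hU hσ
  obtain ⟨τ', hτ', t, ht, hττ'⟩ := exists_conj_eq_smul_of_mem_Cliff hU hτ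
  have hcomm' : σ' * τ' = τ' * σ' := by
    refine smul_right_injective _ (mul_ne_zero hs ht) ?_
    change (s * t) • (σ' * τ') = (s * t) • (τ' * σ')
    rw [← smul_mul_smul_comm, mul_comm s, ← smul_mul_smul_comm, ← hσσ', ← hττ',
      conj_mul_conj_of_mem_unitaryGroup hU.1, conj_mul_conj_of_mem_unitaryGroup hU.1, hcomm]
  rw [SetLike.mem_coe, Submodule.mem_comap, twoCopy_AVec, hσσ', hττ', AVec_smul_left,
    AVec_smul_right]
  exact Submodule.smul_mem _ _ (Submodule.smul_mem _ _ (AVec_mem_VAcom hσ' hτ' hcomm'))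

end Pauli

/-- `V^⊥_{adj}` is invariant and `V_[A]`, `V^⊥_{adj}` carry
equivalent subrepresentations. -/
theorem statement11 (q : ℕ) (hq : 2 ≤ q) :
    IsInvariant q (VadjAperp q) ∧ EquivRep q (VAcom' q) (VadjAperp q) := by
  rw [VAcom'_eq_VAcom, ← map_swapLeft_VAcom]
  refine ⟨?_, swapLeft q, rfl, fun x _ hx => ?_, fun U _ x _ => swapLeft_twoCopy U x⟩
  · rintro U hU _ ⟨x, hx, rfl⟩
    exact ⟨twoCopy U x, isInvariant_VAcom U hU x hx, swapLeft_twoCopy U x⟩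
  · exact swapLeft_involutive.injective (hx.trans (map_zero _).symm)

end CliffordPaper
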